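/- arXiv:2303.14424 — 5 statements merged into one kernel-verified Lean document; each statement's English description precedes it below -/
import Mathlib

section
/- Under the action of the octic group on reinsertion sets, the 25 reinsertion sets {I(r) : r a pure 4-OPT reinsertion scheme} are partitioned into exactly 7 orbits. -/
/-- A 4-OPT reinsertion scheme is encoded as a triple of signed integers
`(s₁p₁, s₂p₂, s₃p₃)` where `(p₁,p₂,p₃)` is a permutation of `(2,3,4)`
and each sign is `+` or `−`. -/
abbrev Scheme := ℤ × ℤ × ℤ

/-- The two possible signs. -/
def signsF : Finset ℤ := {1, -1}

/-- The six permutations of `(2,3,4)`. -/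
def permsF : Finset (ℤ × ℤ × ℤ) := {(2,3,4), (2,4,3), (3,2,4), (3,4,2), (4,2,3), (4,3,2)}

/-- All 48 reinsertion schemes. -/
def allSchemes : Finset Scheme :=
  ((signsF ×ˢ signsF ×ˢ signsF) ×ˢ permsF).image
    (fun x => (x.1.1 * x.2.1, x.1.2.1 * x.2.2.1, x.1.2.2 * x.2.2.2))

/-- The 8 schemes with a fixed underlying permutation `(p.1, p.2.1, p.2.2)`,
obtained by choosing the three signs freely. -/
def schemesOfPerm (p : ℤ × ℤ × ℤ) : Finset Scheme :=
  (signsF ×ˢ signsF ×ˢ signsF).image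
    (fun s => (s.1 * p.1, s.2.1 * p.2.1, s.2.2 * p.2.2))

/-- A scheme `(e₁,e₂,e₃)` is pure if its first entry is not `+2`, its last entry is
not `+4`, and no two consecutive entries are of the form `+t, +(t+1)` or `−t, −(t−1)`. -/
def IsPure (e : Scheme) : Prop :=
  e.1 ≠ 2 ∧ e.2.2 ≠ 4 ∧
  ¬ (0 < e.1 ∧ 0 < e.2.1 ∧ e.2.1 = e.1 + 1) ∧
  ¬ (e.1 < 0 ∧ e.2.1 < 0 ∧ e.2.1 = e.1 + 1) ∧
  ¬ (0 < e.2.1 ∧ 0 < e.2.2 ∧ e.2.2 = e.2.1 + 1) ∧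
  ¬ (e.2.1 < 0 ∧ e.2.2 < 0 ∧ e.2.2 = e.2.1 + 1)

instance : DecidablePred IsPure := fun e => by unfold IsPure; infer_instance

/-- A label is a pair `(l, p)` where `l ∈ ZMod 4` stands for the segment index
(`1,2,3` and `0` standing for `4`) and `p` tells whether the label is primed. -/
abbrev Label := ZMod 4 × Bool

/-- Entry label of the oriented segment `e` (`e = +l` or `e = -l`):
`+l` has entry `(l⊖1)'` and `−l` has entry `l` (plain). -/
def entryL (e : ℤ) : Label :=
  if 0 < e then ((e : ZMod 4) - 1, true) else (-(e : ZMod 4), false)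

/-- Exit label of the oriented segment `e`:
`+l` has exit `l` (plain) and `−l` has exit `(l⊖1)'`. -/
def exitL (e : ℤ) : Label :=
  if 0 < e then ((e : ZMod 4), false) else (-(e : ZMod 4) - 1, true)

/-- The reinsertion set `I(r)` of a scheme `r = (e₁,e₂,e₃)`: joining exits to entries
along the cyclic sequence of oriented segments `(+1, e₁, e₂, e₃)`. -/
def reins (r : Scheme) : Finset (Sym2 Label) :=
  {s(exitL 1, entryL r.1), s(exitL r.1, entryL r.2.1),
   s(exitL r.2.1, entryL r.2.2), s(exitL r.2.2, entryL 1)}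

/-- The action of the octic group (the dihedral group of order 8) on labels:
the rotation `ρ^i` adds `i` to the segment index, and the reflections `ψρ^i`
negate/shift the index and toggle priming (`ψ`, i.e. `sr 0`, maps `(l,p)` to
`(σ l, ¬p)` where `σ` swaps `1 ↔ 3` and fixes `2` and `4`). -/
def actL : DihedralGroup 4 → Label → Label
  | DihedralGroup.r i, x => (x.1 + i, x.2)
  | DihedralGroup.sr i, x => (i - x.1, !x.2)

/-- The induced action on reinsertion sets (elementwise on unordered pairs). -/
def actSet (φ : DihedralGroup 4) (I : Finset (Sym2 Label)) : Finset (Sym2 Label) :=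
  I.image (Sym2.map (actL φ))

/-- The orbit of a reinsertion set under the octic group. -/
def orbitOf (I : Finset (Sym2 Label)) : Finset (Finset (Sym2 Label)) :=
  (Finset.univ : Finset (DihedralGroup 4)).image (fun φ => actSet φ I)

/-- The 25 reinsertion sets of the pure 4-OPT reinsertion schemes are partitioned
into exactly 7 orbits under the action of the octic group. -/
theorem seven_orbits :
    ((allSchemes.filter IsPure).image (fun e => orbitOf (reins e))).card = 7 := by
  decide +kernel
end

section
/- For every n ≥ 8, every complete selection S = (i₁,i₂,i₃,i₄) on the tour T, and every pure 4-OPT reinsertion scheme r, the graph on vertex set ℤ/nℤ with edge set (E(T) \ R(S)) ∪ I_S(r) is a Hamiltonian cycle. -/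
/-- The edges of the tour `0 → 1 → ⋯ → (n−1) → 0` on `ZMod n`. -/
def tourEdges (n : ℕ) : Set (Sym2 (ZMod n)) := {e | ∃ v : ZMod n, e = s(v, v + 1)}

/-- A complete selection: indices `0 ≤ i₁ < i₂ < i₃ < i₄ ≤ n − 1` such that no
`i_h + 1 (mod n)` is again a selection index. -/
structure CompleteSelection (n : ℕ) where
  i : Fin 4 → ℕ
  mono : StrictMono i
  le : i 3 ≤ n - 1
  complete : ∀ h k : Fin 4, (i h + 1) % n ≠ i k

/-- The removal set `R(S)` of a selection, as edges of `ZMod n`. -/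
def removalSet {n : ℕ} (S : CompleteSelection n) : Finset (Sym2 (ZMod n)) :=
  Finset.univ.image (fun k : Fin 4 => s(((S.i k : ZMod n)), (S.i k : ZMod n) + 1))

/-- Instantiation of a label at a selection: label `l` becomes the vertex `i_l`
and label `l'` becomes the vertex `i_l + 1 (mod n)`. -/
def instLabel {n : ℕ} (S : CompleteSelection n) (x : Label) : ZMod n :=
  ((S.i ⟨(x.1 - 1).val, ZMod.val_lt _⟩ : ℕ) : ZMod n) + (if x.2 then 1 else 0)

/-- The instantiated reinsertion set `I_S(r)`. -/
def instReins {n : ℕ} (S : CompleteSelection n) (r : Scheme) : Finset (Sym2 (ZMod n)) :=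
  (reins r).image (Sym2.map (instLabel S))

/-- A simple graph "is a Hamiltonian cycle" if it has a Hamiltonian cycle
whose edges are exactly all the edges of the graph. -/
def IsHamCycleGraph {V : Type*} [DecidableEq V] (G : SimpleGraph V) : Prop :=
  ∃ (v : V) (w : G.Walk v v), w.IsHamiltonianCycle ∧ {e | e ∈ w.edges} = G.edgeSet


def pe {V : Type*} : List V → List (Sym2 V)
  | a :: b :: t => s(a, b) :: pe (b :: t)
  | _ => []

theorem mem_of_mem_pe {V : Type*} (l : List V) (e : Sym2 V) (he : e ∈ pe l) (v : V)
    (hv : v ∈ e) : v ∈ l := by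
  induction l with
  | nil => simp [pe] at he
  | cons a t ih =>
    cases t with
    | nil => simp [pe] at he
    | cons b t =>
      simp only [pe, List.mem_cons] at he
      rcases he with rfl | he
      · simp only [Sym2.mem_iff] at hv
        rcases hv with rfl | rfl <;> simp
      · exact List.mem_cons_of_mem _ (ih he)

theorem pe_append {V : Type*} (l m : List V) (hl : l ≠ []) (hm : m ≠ []) :
    pe (l ++ m) = pe l ++ s(l.getLast hl, m.head hm) :: pe m := by
  induction l with
  | nil => exact absurd rfl hl
  | cons a t ih =>
    cases t with
    | nil =>
      cases m with
      | nil => exact absurd rfl hm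
      | cons c m => simp [pe]
    | cons b t =>
      have := ih (by simp)
      simp only [List.cons_append] at this
      simp [pe, this]

theorem mem_pe_reverse {V : Type*} (l : List V) (e : Sym2 V) :
    e ∈ pe l.reverse ↔ e ∈ pe l := by
  induction l with
  | nil => simp
  | cons a t ih =>
    cases t with
    | nil => simp
    | cons b t =>
      rw [List.reverse_cons, pe_append _ _ (by simp) (by simp)]
      simp only [List.mem_append, List.mem_cons, ih]
      simp [pe]
      rw [Sym2.eq_swap]; tauto

theorem exists_walk {V : Type*} (E : Set (Sym2 V)) (t : List V) : ∀ (a : V),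
    (a :: t).Nodup → (∀ e ∈ pe (a :: t), e ∈ E) →
    ∃ w : (SimpleGraph.fromEdgeSet E).Walk a ((a :: t).getLast (by simp)),
      w.support = a :: t ∧ w.edges = pe (a :: t) := by
  induction t with
  | nil => intro a _ _; exact ⟨SimpleGraph.Walk.nil, by simp, by simp [pe]⟩
  | cons b t ih =>
    intro a hn hE
    obtain ⟨w, h1, h2⟩ := ih b (List.nodup_cons.1 hn).2
      (fun e he => hE e (by simp [pe, he]))
    have hab : (SimpleGraph.fromEdgeSet E).Adj a b := by
      rw [SimpleGraph.fromEdgeSet_adj]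
      refine ⟨hE _ (by simp [pe]), ?_⟩
      rintro rfl
      simp at hn
    refine ⟨(SimpleGraph.Walk.cons hab w).copy rfl (by simp), by simp [h1], by simp [h2, pe]⟩

theorem ham_of_list {V : Type*} [DecidableEq V] (a b c : V) (t : List V)
    (hnd : (a :: b :: c :: t).Nodup) (hall : ∀ v, v ∈ a :: b :: c :: t)
    (E : Set (Sym2 V))
    (hE : ∀ e, e ∈ E ↔ e ∈ pe (a :: b :: c :: t) ∨
      e = s((a :: b :: c :: t).getLast (by simp), a)) :
    IsHamCycleGraph (SimpleGraph.fromEdgeSet E) := by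
  obtain ⟨w, h1, h2⟩ := exists_walk E (b :: c :: t) a hnd (fun e he => (hE e).2 (Or.inl he))
  have hlast : (a :: b :: c :: t).getLast (by simp) ∈ c :: t := by
    have : (a :: b :: c :: t).getLast (by simp) = (c :: t).getLast (by simp) := by simp
    rw [this]; exact List.getLast_mem _
  generalize hz : (a :: b :: c :: t).getLast (by simp) = z at *
  have hna : a ∉ b :: c :: t := (List.nodup_cons.1 hnd).1
  have hnb : b ∉ c :: t := (List.nodup_cons.1 (List.nodup_cons.1 hnd).2).1
  have hza : z ≠ a := by
    rintro rfl
    exact hna (List.mem_cons_of_mem _ hlast)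
  have hadj : (SimpleGraph.fromEdgeSet E).Adj z a := by
    rw [SimpleGraph.fromEdgeSet_adj]
    exact ⟨(hE _).2 (Or.inr rfl), hza⟩
  have hp : w.IsPath := by
    rw [SimpleGraph.Walk.isPath_def, h1]; exact hnd
  have hno : s(z, a) ∉ w.edges := by
    rw [h2]
    intro h
    simp only [pe] at h
    rcases List.mem_cons.1 h with h | h
    · rw [Sym2.eq_iff] at h
      rcases h with ⟨h, _⟩ | ⟨h, _⟩
      · exact hza h
      · exact hnb (h ▸ hlast)
    · exact hna (mem_of_mem_pe (b :: c :: t) _ h a (by simp))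
  refine ⟨z, SimpleGraph.Walk.cons hadj w, ?_, ?_⟩
  · refine ⟨(SimpleGraph.Walk.cons_isCycle_iff w hadj).2 ⟨hp, hno⟩, ?_⟩
    simp only [SimpleGraph.Walk.tail_cons]
    intro v
    have : (w.copy rfl rfl).support.count v = 1 := by
      simp only [SimpleGraph.Walk.copy_rfl_rfl, h1]
      exact List.count_eq_one_of_mem hnd (hall v)
    simpa using this
  · ext e
    simp only [Set.mem_setOf_eq, SimpleGraph.Walk.edges_cons, List.mem_cons, h2,
      SimpleGraph.edgeSet_fromEdgeSet, Set.mem_diff, hE]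
    constructor
    · intro h
      refine ⟨h.symm, ?_⟩
      have : e ∈ (SimpleGraph.Walk.cons hadj w).edges := by
        simp only [SimpleGraph.Walk.edges_cons, List.mem_cons, h2]; exact h
      exact (SimpleGraph.not_isDiag_of_mem_edgeSet _
        (SimpleGraph.Walk.edges_subset_edgeSet _ this))
    · rintro ⟨h, _⟩; exact h.symm

def segL (n a b : ℕ) : List (ZMod n) := (List.range' (a + 1) (b - a)).map (fun k : ℕ => (k : ZMod n))

theorem mem_pe_range (n m : ℕ) : ∀ (a : ℕ) (e : Sym2 (ZMod n)),
    e ∈ pe ((List.range' a m).map (fun k : ℕ => (k : ZMod n))) ↔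
      ∃ k : ℕ, a ≤ k ∧ k + 1 < a + m ∧ e = s((k : ZMod n), (k : ZMod n) + 1) := by
  induction m with
  | zero => intro a e; simp [pe]; omega
  | succ m ih =>
    intro a e
    cases m with
    | zero => simp [pe]; omega
    | succ m =>
      have := ih (a + 1) e
      simp only [List.range'_succ, List.map_cons, pe, List.mem_cons] at this ⊢
      rw [this]
      constructor
      · rintro (rfl | ⟨k, h1, h2, rfl⟩)
        · exact ⟨a, le_rfl, by omega, by push_cast; rfl⟩
        · exact ⟨k, by omega, by omega, rfl⟩
      · rintro ⟨k, h1, h2, rfl⟩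
        rcases Nat.eq_or_lt_of_le h1 with rfl | h
        · left; push_cast; rfl
        · right; exact ⟨k, by omega, by omega, rfl⟩

def loS {n : ℕ} (S : CompleteSelection n) (m : ℤ) : ℕ :=
  if m = 1 then S.i 3 else if m = 2 then S.i 0 else if m = 3 then S.i 1 else S.i 2

def hiS {n : ℕ} (S : CompleteSelection n) (m : ℤ) : ℕ :=
  if m = 1 then S.i 0 + n else if m = 2 then S.i 1 else if m = 3 then S.i 2 else S.i 3

def segS {n : ℕ} (S : CompleteSelection n) (m : ℤ) : List (ZMod n) := segL n (loS S m) (hiS S m)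

def block {n : ℕ} (S : CompleteSelection n) (e : ℤ) : List (ZMod n) :=
  if 0 < e then segS S e else (segS S (-e)).reverse

def good (e : ℤ) : Prop := e = 1 ∨ e = 2 ∨ e = 3 ∨ e = 4 ∨ e = -2 ∨ e = -3 ∨ e = -4

theorem segL_ne (n a b : ℕ) (h : a < b) : segL n a b ≠ [] := by
  simp [segL]; omega

theorem segL_head (n a b : ℕ) (h : a < b) (hne : segL n a b ≠ []) :
    (segL n a b).head hne = (a : ZMod n) + 1 := by
  simp [segL]

theorem segL_last (n a b : ℕ) (h : a < b) (hne : segL n a b ≠ []) :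
    (segL n a b).getLast hne = (b : ZMod n) := by
  simp only [segL, List.getLast_map, List.getLast_range']
  congr 1; omega

theorem sel_lt {n : ℕ} (hn : 8 ≤ n) (S : CompleteSelection n) :
    S.i 0 < S.i 1 ∧ S.i 1 < S.i 2 ∧ S.i 2 < S.i 3 ∧ S.i 3 < n :=
  ⟨S.mono (by decide), S.mono (by decide), S.mono (by decide), by have := S.le; omega⟩

theorem lo_lt_hi {n : ℕ} (hn : 8 ≤ n) (S : CompleteSelection n) (m : ℤ) : loS S m < hiS S m := by
  have := sel_lt hn S
  unfold loS hiS
  split_ifs <;> omega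

theorem block_ne {n : ℕ} (hn : 8 ≤ n) (S : CompleteSelection n) (e : ℤ) : block S e ≠ [] := by
  unfold block
  split_ifs
  · exact segL_ne _ _ _ (lo_lt_hi hn S _)
  · simpa [segS] using segL_ne n _ _ (lo_lt_hi hn S (-e))

theorem instLabel_mk {n : ℕ} (S : CompleteSelection n) (x : ZMod 4) (p : Bool) (j : Fin 4)
    (h : (x - 1).val = j.val) : instLabel S (x, p) = (S.i j : ZMod n) + (if p then 1 else 0) := by
  have : (⟨(x - 1).val, ZMod.val_lt _⟩ : Fin 4) = j := Fin.ext h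
  unfold instLabel
  simp only [this]

theorem block_head {n : ℕ} (hn : 8 ≤ n) (S : CompleteSelection n) (e : ℤ) (he : good e) :
    (block S e).head (block_ne hn S e) = instLabel S (entryL e) := by
  rcases he with rfl | rfl | rfl | rfl | rfl | rfl | rfl <;>
    simp [block, segS, segL_head _ _ _ (lo_lt_hi hn S _), segL_last _ _ _ (lo_lt_hi hn S _),
      entryL] <;> simp [loS, hiS]
  · rw [instLabel_mk S _ _ 3 (by decide)]; simp
  · rw [instLabel_mk S _ _ 0 (by decide)]; simp
  · rw [instLabel_mk S _ _ 1 (by decide)]; simp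
  · rw [instLabel_mk S _ _ 2 (by decide)]; simp
  · rw [instLabel_mk S _ _ 1 (by decide)]; simp
  · rw [instLabel_mk S _ _ 2 (by decide)]; simp
  · rw [instLabel_mk S _ _ 3 (by decide)]; simp

theorem block_last {n : ℕ} (hn : 8 ≤ n) (S : CompleteSelection n) (e : ℤ) (he : good e) :
    (block S e).getLast (block_ne hn S e) = instLabel S (exitL e) := by
  rcases he with rfl | rfl | rfl | rfl | rfl | rfl | rfl <;>
    simp [block, segS, segL_head _ _ _ (lo_lt_hi hn S _), segL_last _ _ _ (lo_lt_hi hn S _),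
      exitL] <;> simp [loS, hiS]
  · rw [instLabel_mk S _ _ 0 (by decide)]; simp
  · rw [instLabel_mk S _ _ 1 (by decide)]; simp
  · rw [instLabel_mk S _ _ 2 (by decide)]; simp
  · rw [instLabel_mk S _ _ 3 (by decide)]; simp
  · rw [instLabel_mk S _ _ 0 (by decide)]; simp
  · rw [instLabel_mk S _ _ 1 (by decide)]; simp
  · rw [instLabel_mk S _ _ 2 (by decide)]; simp

theorem mem_block {n : ℕ} (S : CompleteSelection n) (e : ℤ) (v : ZMod n) :
    v ∈ block S e ↔ v ∈ segS S |e| := by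
  unfold block
  split_ifs with h
  · rw [abs_of_pos h]
  · rw [abs_of_nonpos (by omega)]; simp

theorem mem_pe_block {n : ℕ} (S : CompleteSelection n) (e : ℤ) (v : Sym2 (ZMod n)) :
    v ∈ pe (block S e) ↔ v ∈ pe (segS S |e|) := by
  unfold block
  split_ifs with h
  · rw [abs_of_pos h]
  · rw [abs_of_nonpos (by omega), mem_pe_reverse]

theorem length_block {n : ℕ} (S : CompleteSelection n) (e : ℤ) :
    (block S e).length = hiS S |e| - loS S |e| := by
  unfold block
  split_ifs with h
  · rw [abs_of_pos h]; simp [segS, segL]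
  · rw [abs_of_nonpos (by omega)]; simp [segS, segL]

theorem scheme_cases (r : Scheme) (hr : r ∈ allSchemes) :
    good r.1 ∧ good r.2.1 ∧ good r.2.2 ∧ (|r.1|, |r.2.1|, |r.2.2|) ∈ permsF := by
  have : ∀ r ∈ allSchemes, good r.1 ∧ good r.2.1 ∧ good r.2.2 ∧
      (|r.1|, |r.2.1|, |r.2.2|) ∈ permsF := by
    unfold good
    decide
  exact this r hr

theorem mem_permsF (p : ℤ → Prop) (r : ℤ × ℤ × ℤ) (h : r ∈ permsF) :
    (p r.1 ∨ p r.2.1 ∨ p r.2.2) ↔ (p 2 ∨ p 3 ∨ p 4) := by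
  simp only [permsF, Finset.mem_insert, Finset.mem_singleton] at h
  rcases h with rfl | rfl | rfl | rfl | rfl | rfl <;> simp only [] <;> tauto

theorem sum_permsF (p : ℤ → ℕ) (r : ℤ × ℤ × ℤ) (h : r ∈ permsF) :
    p r.1 + p r.2.1 + p r.2.2 = p 2 + p 3 + p 4 := by
  simp only [permsF, Finset.mem_insert, Finset.mem_singleton] at h
  rcases h with rfl | rfl | rfl | rfl | rfl | rfl <;> simp only [] <;> omega

theorem cast_inj_small {n : ℕ} (a b : ℕ) (ha : a < n) (hb : b < n)
    (h : (a : ZMod n) = (b : ZMod n)) : a = b := by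
  rw [ZMod.natCast_eq_natCast_iff'] at h
  rwa [Nat.mod_eq_of_lt ha, Nat.mod_eq_of_lt hb] at h

theorem mem_segS {n : ℕ} (S : CompleteSelection n) (m : ℤ) (k : ℕ) (h1 : loS S m < k)
    (h2 : k ≤ hiS S m) : (k : ZMod n) ∈ segS S m := by
  unfold segS segL
  refine List.mem_map.2 ⟨k, ?_, rfl⟩
  rw [List.mem_range'_1]; omega

theorem cover {n : ℕ} (hn : 8 ≤ n) (S : CompleteSelection n) (v : ZMod n) :
    v ∈ segS S 1 ∨ v ∈ segS S 2 ∨ v ∈ segS S 3 ∨ v ∈ segS S 4 := by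
  haveI : NeZero n := ⟨by omega⟩
  have hv := ZMod.natCast_zmod_val v
  have hlt := ZMod.val_lt v
  generalize v.val = k at *
  have hk : ((k + n : ℕ) : ZMod n) = v := by simp [hv]
  have hs := sel_lt hn S
  by_cases c0 : k ≤ S.i 0
  · left; rw [← hk]; apply mem_segS <;> simp [loS, hiS] <;> omega
  by_cases c1 : k ≤ S.i 1
  · right; left; rw [← hv]; apply mem_segS <;> simp [loS, hiS] <;> omega
  by_cases c2 : k ≤ S.i 2
  · right; right; left; rw [← hv]; apply mem_segS <;> simp [loS, hiS] <;> omega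
  by_cases c3 : k ≤ S.i 3
  · right; right; right; rw [← hv]; apply mem_segS <;> simp [loS, hiS] <;> omega
  · left; rw [← hv]; apply mem_segS <;> simp [loS, hiS] <;> omega

theorem mem_pe_segS {n : ℕ} (hn : 8 ≤ n) (S : CompleteSelection n) (m : ℤ) (e : Sym2 (ZMod n)) :
    e ∈ pe (segS S m) ↔
      ∃ k : ℕ, loS S m < k ∧ k < hiS S m ∧ e = s((k : ZMod n), (k : ZMod n) + 1) := by
  have := lo_lt_hi hn S m
  unfold segS segL
  rw [mem_pe_range]
  constructor
  · rintro ⟨k, h1, h2, h⟩; exact ⟨k, by omega, by omega, h⟩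
  · rintro ⟨k, h1, h2, h⟩; exact ⟨k, by omega, by omega, h⟩

theorem edge_inj {n : ℕ} (hn : 8 ≤ n) (x y : ZMod n) (h : s(x, x + 1) = s(y, y + 1)) : x = y := by
  rw [Sym2.eq_iff] at h
  rcases h with ⟨h, _⟩ | ⟨h1, h2⟩
  · exact h
  · exfalso
    have h3 : ((2 : ℕ) : ZMod n) = ((0 : ℕ) : ZMod n) := by
      push_cast
      rw [h1] at h2
      linear_combination h2
    have := cast_inj_small 2 0 (by omega) (by omega) h3
    omega

theorem not_removed {n : ℕ} (hn : 8 ≤ n) (S : CompleteSelection n) (k : ℕ)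
    (h : ∀ j, k % n ≠ S.i j) : s((k : ZMod n), (k : ZMod n) + 1) ∉ removalSet S := by
  intro hm
  simp only [removalSet, Finset.mem_image, Finset.mem_univ, true_and] at hm
  obtain ⟨j, hj⟩ := hm
  have := edge_inj hn _ _ hj
  rw [ZMod.natCast_eq_natCast_iff'] at this
  have hjn : S.i j < n := by
    have := S.mono.monotone (Fin.le_last j)
    have h3 := (sel_lt hn S).2.2.2
    exact lt_of_le_of_lt this h3
  rw [Nat.mod_eq_of_lt hjn] at this
  exact h j this.symm

theorem tour_diff {n : ℕ} (hn : 8 ≤ n) (S : CompleteSelection n) (e : Sym2 (ZMod n)) :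
    (e ∈ tourEdges n \ (↑(removalSet S) : Set (Sym2 (ZMod n)))) ↔
      (e ∈ pe (segS S 1) ∨ e ∈ pe (segS S 2) ∨ e ∈ pe (segS S 3) ∨ e ∈ pe (segS S 4)) := by
  haveI : NeZero n := ⟨by omega⟩
  have hs := sel_lt hn S
  simp only [mem_pe_segS hn]
  constructor
  · rintro ⟨⟨v, rfl⟩, hr⟩
    have hv := ZMod.natCast_zmod_val v
    have hlt := ZMod.val_lt v
    generalize v.val = k at *
    have hk : ((k + n : ℕ) : ZMod n) = v := by simp [hv]
    have hne : ∀ j, k ≠ S.i j := by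
      rintro j rfl
      apply hr
      simp only [removalSet, Finset.coe_image, Set.mem_image]
      exact ⟨j, by simp, by rw [hv]⟩
    have n0 := hne 0
    have n1 := hne 1
    have n2 := hne 2
    have n3 := hne 3
    by_cases c0 : k ≤ S.i 0
    · left; refine ⟨k + n, ?_, ?_, by rw [hk]⟩ <;> simp [loS, hiS] <;> omega
    by_cases c1 : k ≤ S.i 1
    · right; left; refine ⟨k, ?_, ?_, by rw [hv]⟩ <;> simp [loS, hiS] <;> omega
    by_cases c2 : k ≤ S.i 2
    · right; right; left; refine ⟨k, ?_, ?_, by rw [hv]⟩ <;> simp [loS, hiS] <;> omega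
    by_cases c3 : k ≤ S.i 3
    · right; right; right; refine ⟨k, ?_, ?_, by rw [hv]⟩ <;> simp [loS, hiS] <;> omega
    · left; refine ⟨k, ?_, ?_, by rw [hv]⟩ <;> simp [loS, hiS] <;> omega
  · have key : ∀ k : ℕ, (∀ j, k % n ≠ S.i j) → s((k : ZMod n), (k : ZMod n) + 1) ∈
        tourEdges n \ (↑(removalSet S) : Set (Sym2 (ZMod n))) := fun k h =>
      ⟨⟨_, rfl⟩, fun hm => not_removed hn S k h (Finset.mem_coe.1 hm)⟩
    rintro (⟨k, h1, h2, rfl⟩ | ⟨k, h1, h2, rfl⟩ | ⟨k, h1, h2, rfl⟩ | ⟨k, h1, h2, rfl⟩) <;>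
      simp [loS, hiS] at h1 h2 <;> apply key <;> intro j
    · by_cases hk : k < n
      · rw [Nat.mod_eq_of_lt hk]; fin_cases j <;> simp <;> omega
      · rw [Nat.mod_eq_sub_mod (by omega), Nat.mod_eq_of_lt (by omega)]
        fin_cases j <;> simp <;> omega
    all_goals
      rw [Nat.mod_eq_of_lt (by omega)]; fin_cases j <;> simp <;> omega

theorem move_gives_tour (n : ℕ) (hn : 8 ≤ n) (S : CompleteSelection n) (r : Scheme)
    (hr : r ∈ allSchemes) (hpure : IsPure r) :
    IsHamCycleGraph (SimpleGraph.fromEdgeSet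
      ((tourEdges n \ ↑(removalSet S)) ∪ ↑(instReins S r))) := by
  haveI : NeZero n := ⟨by omega⟩
  obtain ⟨g1, g2, g3, hp⟩ := scheme_cases r hr
  have g0 : good 1 := Or.inl rfl
  have hs := sel_lt hn S
  have b0 := block_ne hn S 1
  have b1 := block_ne hn S r.1
  have b2 := block_ne hn S r.2.1
  have b3 := block_ne hn S r.2.2
  obtain ⟨L, hL⟩ : ∃ L, L = block S 1 ++ (block S r.1 ++ (block S r.2.1 ++ block S r.2.2)) :=
    ⟨_, rfl⟩
  have hlen : L.length = n := by
    have := sum_permsF (fun m => hiS S m - loS S m) _ hp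
    simp only at this
    rw [hL]
    simp only [List.length_append, length_block]
    rw [← add_assoc (hiS S |r.1| - _), this]
    simp [loS, hiS]
    omega
  have hall : ∀ v, v ∈ L := by
    intro v
    have := mem_permsF (fun m => v ∈ segS S m) _ hp
    simp only at this
    rw [hL]
    simp only [List.mem_append, mem_block, this, abs_one]
    exact cover hn S v
  have hnd : L.Nodup := by
    have h1 : L.toFinset = Finset.univ := by ext v; simp [hall v]
    have h2 : L.toFinset.card = L.length := by rw [h1, hlen]; simp [ZMod.card]
    rw [List.card_toFinset] at h2
    exact List.dedup_eq_self.1 ((List.dedup_sublist L).eq_of_length h2)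
  have hLne : L ≠ [] := by rw [hL]; simp [b0]
  have hhead : L.head hLne = instLabel S (entryL 1) := by
    rw [← block_head hn S 1 g0]; simp only [hL]; rw [List.head_append_of_ne_nil]
  have hlast : L.getLast hLne = instLabel S (exitL r.2.2) := by
    rw [← block_last hn S _ g3]; simp only [hL]
    simp [List.getLast_append_of_ne_nil, b1, b2, b3]
  have hE : ∀ e, e ∈ ((tourEdges n \ ↑(removalSet S)) ∪ ↑(instReins S r) : Set (Sym2 (ZMod n))) ↔
      e ∈ pe L ∨ e = s(L.getLast hLne, L.head hLne) := by
    intro e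
    have h := mem_permsF (fun m => e ∈ pe (segS S m)) _ hp
    simp only at h
    have hI : e ∈ (↑(instReins S r) : Set (Sym2 (ZMod n))) ↔
        e = s(instLabel S (exitL 1), instLabel S (entryL r.1)) ∨
        e = s(instLabel S (exitL r.1), instLabel S (entryL r.2.1)) ∨
        e = s(instLabel S (exitL r.2.1), instLabel S (entryL r.2.2)) ∨
        e = s(instLabel S (exitL r.2.2), instLabel S (entryL 1)) := by
      simp [instReins, reins, eq_comm]
    rw [Set.mem_union, tour_diff hn, ← h, hI, hhead, hlast, hL,
      pe_append _ _ b0 (by simp [b1]), pe_append _ _ b1 (by simp [b2]), pe_append _ _ b2 b3,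
      List.head_append_of_ne_nil b1, List.head_append_of_ne_nil b2,
      block_head hn S _ g1, block_head hn S _ g2, block_head hn S _ g3,
      block_last hn S _ g0, block_last hn S _ g1, block_last hn S _ g2]
    simp only [List.mem_append, List.mem_cons, mem_pe_block, abs_one]
    simp only [or_assoc, or_comm, or_left_comm]
  clear hhead hlast hL
  match L, hlen, hall, hnd, hLne, hE with
  | a :: b :: c :: t, _, hall, hnd, _, hE => exact ham_of_list a b c t hnd hall _ hE
  | [a, b], h, _, _, _, _ => simp at h; omega
  | [a], h, _, _, _, _ => simp at h; omega
  | [], h, _, _, _, _ => simp at h; omega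
end

section
/- For every n ≥ 8 and every complete selection S = (i₁,i₂,i₃,i₄) on the tour T, the number of sets I of 4 unordered pairs of distinct vertices of ℤ/nℤ with I ∩ R(S) = ∅ such that the graph on vertex set ℤ/nℤ with edge set (E(T) \ R(S)) ∪ I is a Hamiltonian cycle is exactly 25. -/
/-- Segment of an endpoint. -/
def sgk (k : Fin 8) : Fin 4 := ⟨((k.val + 1) / 2) % 4, Nat.mod_lt _ (by decide)⟩

/-- The endpoint joined to `k` by a removed edge. -/
def twk : Fin 8 → Fin 8 := ![1,0,3,2,5,4,7,6]

/-- Connectivity of the contracted graph. -/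
def connB (f : Fin 8 → Fin 8) : Prop := ∀ a b c d : Bool,
  (∀ k, (![a,b,c,d] : Fin 4 → Bool) (sgk k) = (![a,b,c,d] : Fin 4 → Bool) (sgk (f k))) →
    a = b ∧ a = c ∧ a = d

instance : DecidablePred connB := fun f => by unfold connB; infer_instance

/-- Valid matchings. -/
def ValidM (f : Fin 8 → Fin 8) : Prop :=
  (∀ k, f (f k) = k) ∧ (∀ k, f k ≠ k) ∧ (∀ k, f k ≠ twk k) ∧ connB f

instance : DecidablePred ValidM := fun f => by unfold ValidM; infer_instance

/-- The list of the 25 matchings. -/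
def listM : List (Fin 8 → Fin 8) :=
  [![2,3,0,1,6,7,4,5],
   ![2,4,0,6,1,7,3,5],
   ![2,5,0,6,7,1,3,4],
   ![2,5,0,7,6,1,4,3],
   ![2,6,0,5,7,3,1,4],
   ![3,4,6,0,1,7,2,5],
   ![3,5,7,0,6,1,4,2],
   ![3,6,4,0,2,7,1,5],
   ![3,7,5,0,6,2,4,1],
   ![4,3,6,1,0,7,2,5],
   ![4,5,7,6,0,1,3,2],
   ![4,6,7,5,0,3,1,2],
   ![4,7,5,6,0,2,3,1],
   ![4,7,6,5,0,3,2,1],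
   ![5,3,6,1,7,0,2,4],
   ![5,3,7,1,6,0,4,2],
   ![5,4,6,7,1,0,2,3],
   ![5,4,7,6,1,0,3,2],
   ![5,6,4,7,2,0,1,3],
   ![5,7,4,6,2,0,3,1],
   ![6,3,5,1,7,2,0,4],
   ![6,4,5,7,1,2,0,3],
   ![6,4,7,5,1,3,0,2],
   ![6,5,4,7,2,1,0,3],
   ![6,7,4,5,2,3,0,1]]

theorem listM_valid : ∀ f ∈ listM, ValidM f := by
  have h : listM.all (fun f => decide (ValidM f)) = true := by decide +kernel
  intro f hf
  exact of_decide_eq_true (List.all_eq_true.1 h f hf)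
theorem listM_nodup : listM.Nodup := by decide +kernel
theorem listM_sg : ∀ f ∈ listM, ∀ k, sgk (f k) ≠ sgk k := by
  have h : listM.all (fun f => decide (∀ k, sgk (f k) ≠ sgk k)) = true := by decide +kernel
  intro f hf
  exact of_decide_eq_true (List.all_eq_true.1 h f hf)
theorem listM_card : ∀ f ∈ listM,
    (Finset.univ.image (fun k : Fin 8 => s(k, f k))).card = 4 := by
  have h : listM.all (fun f => decide ((Finset.univ.image (fun k : Fin 8 => s(k, f k))).card = 4)) = true := by decide +kernel
  intro f hf
  exact of_decide_eq_true (List.all_eq_true.1 h f hf)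

set_option maxRecDepth 100000 in
set_option synthInstance.maxHeartbeats 0 in
set_option synthInstance.maxSize 10000 in
theorem listM_aux : ∀ a : Fin 8, a ≠ 0 ∧ a ≠ 1 →
  ∀ b : Fin 8, b ≠ 1 ∧ b ≠ 0 ∧ b ≠ a →
  ∀ c : Fin 8, c ≠ 2 ∧ c ≠ 3 ∧ (a = 2 ↔ c = 0) ∧ (b = 2 ↔ c = 1) →
  ∀ d : Fin 8, d ≠ 3 ∧ d ≠ 2 ∧ (a = 3 ↔ d = 0) ∧ (b = 3 ↔ d = 1) →
  ∀ e : Fin 8, e ≠ 4 ∧ e ≠ 5 ∧ (a = 4 ↔ e = 0) ∧ (b = 4 ↔ e = 1) ∧ (c = 4 ↔ e = 2) ∧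
    (d = 4 ↔ e = 3) →
  ∀ f : Fin 8, f ≠ 5 ∧ f ≠ 4 ∧ (a = 5 ↔ f = 0) ∧ (b = 5 ↔ f = 1) ∧ (c = 5 ↔ f = 2) ∧
    (d = 5 ↔ f = 3) →
  ∀ g : Fin 8, g ≠ 6 ∧ g ≠ 7 ∧ (a = 6 ↔ g = 0) ∧ (b = 6 ↔ g = 1) ∧ (c = 6 ↔ g = 2) ∧
    (d = 6 ↔ g = 3) ∧ (e = 6 ↔ g = 4) ∧ (f = 6 ↔ g = 5) →
  ∀ h : Fin 8, h ≠ 7 ∧ h ≠ 6 ∧ (a = 7 ↔ h = 0) ∧ (b = 7 ↔ h = 1) ∧ (c = 7 ↔ h = 2) ∧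
    (d = 7 ↔ h = 3) ∧ (e = 7 ↔ h = 4) ∧ (f = 7 ↔ h = 5) →
   ValidM ![a,b,c,d,e,f,g,h] → ![a,b,c,d,e,f,g,h] ∈ listM := by decide +kernel

theorem mem_listM_iff (f : Fin 8 → Fin 8) : f ∈ listM ↔ ValidM f := by
  refine ⟨listM_valid f, fun hv => ?_⟩
  have hf : f = ![f 0, f 1, f 2, f 3, f 4, f 5, f 6, f 7] := by
    funext k; fin_cases k <;> rfl
  have h2 := hv
  obtain ⟨h, hne, ht, -⟩ := h2
  have hs : ∀ i j : Fin 8, f i = j ↔ f j = i :=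
    fun i j => ⟨fun e => by rw [← e, h], fun e => by rw [← e, h]⟩
  have hi : ∀ i j : Fin 8, f i = f j → i = j := fun i j e => by rw [← h i, e, h]
  rw [hf] at hv ⊢
  refine listM_aux _ ⟨hne 0, ht 0⟩ _ ⟨hne 1, ht 1, fun e => absurd (hi _ _ e) (by decide)⟩
    _ ⟨hne 2, ht 2, hs _ _, hs _ _⟩ _ ⟨hne 3, ht 3, hs _ _, hs _ _⟩
    _ ⟨hne 4, ht 4, hs _ _, hs _ _, hs _ _, hs _ _⟩
    _ ⟨hne 5, ht 5, hs _ _, hs _ _, hs _ _, hs _ _⟩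
    _ ⟨hne 6, ht 6, hs _ _, hs _ _, hs _ _, hs _ _, hs _ _, hs _ _⟩
    _ ⟨hne 7, ht 7, hs _ _, hs _ _, hs _ _, hs _ _, hs _ _, hs _ _⟩ hv

theorem ham_iff {V : Type*} [DecidableEq V] [Finite V] [Nontrivial V] (G : SimpleGraph V) :
    IsHamCycleGraph G ↔ G.Connected ∧ ∀ v, (G.neighborSet v).ncard = 2 := by
  have := Fintype.ofFinite V
  constructor
  · rintro ⟨v, w, hw, he⟩
    refine ⟨SimpleGraph.IsHamiltonian.connected (fun _ => ⟨v, w, hw⟩), fun u => ?_⟩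
    rw [← hw.isCycle.ncard_neighborSet_toSubgraph_eq_two (hw.mem_support u)]
    congr 1
    ext x
    simp only [SimpleGraph.mem_neighborSet, SimpleGraph.Subgraph.mem_neighborSet,
      SimpleGraph.Walk.adj_toSubgraph_iff_mem_edges]
    rw [← SimpleGraph.mem_edgeSet, ← he]; rfl
  · rintro ⟨hc, hd⟩
    have hcy : G.IsCycles := fun v _ => hd v
    obtain ⟨v⟩ := hc.nonempty
    have hne : (G.neighborSet v).Nonempty := by
      apply Set.nonempty_of_ncard_ne_zero; rw [hd]; decide
    obtain ⟨p, hp, hv⟩ := hcy.exists_cycle_toSubgraph_verts_eq_connectedComponentSupp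
      (c := G.connectedComponentMk v) rfl hne
    have hall : ∀ u, u ∈ p.support := by
      intro u
      rw [← SimpleGraph.Walk.mem_verts_toSubgraph, hv]
      exact SimpleGraph.ConnectedComponent.sound (hc.preconnected u v)
    refine ⟨v, p, ?_, ?_⟩
    · rw [SimpleGraph.Walk.isHamiltonianCycle_iff_isCycle_and_support_count_tail_eq_one]
      refine ⟨hp, fun a => List.count_eq_one_of_mem hp.support_nodup ?_⟩
      by_cases hav : a = v
      · subst hav
        exact SimpleGraph.Walk.end_mem_tail_support hp.not_nil
      · have := hall a
        rw [SimpleGraph.Walk.mem_support_iff] at this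
        tauto
    · ext e
      induction e with
      | _ x y =>
        have h1 : p.toSubgraph.neighborSet x = G.neighborSet x := by
          apply Set.eq_of_subset_of_ncard_le (p.toSubgraph.neighborSet_subset x)
          rw [hd, hp.ncard_neighborSet_toSubgraph_eq_two (hall x)]
        have h2 := Set.ext_iff.1 h1 y
        simp only [SimpleGraph.mem_neighborSet, SimpleGraph.Subgraph.mem_neighborSet,
          SimpleGraph.Walk.adj_toSubgraph_iff_mem_edges] at h2
        rw [SimpleGraph.mem_edgeSet, ← h2]; rfl

theorem conn_iff {V : Type*} [Nonempty V] (G : SimpleGraph V) :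
    G.Connected ↔ ∀ f : V → Bool, (∀ x y, G.Adj x y → f x = f y) → ∀ x y, f x = f y := by
  classical
  constructor
  · intro h f hf x y
    obtain ⟨w⟩ := h.preconnected x y
    induction w with
    | nil => rfl
    | cons h _ ih => exact (hf _ _ h).trans ih
  · intro h
    refine ⟨fun x y => ?_⟩
    have := h (fun z => decide (G.Reachable x z)) (fun a b hab => by
      simp only [decide_eq_decide]
      exact ⟨fun h => h.trans hab.reachable, fun h => h.trans hab.symm.reachable⟩) x y
    simpa using this

/-- Even endpoint. -/
def evk (h : Fin 4) : Fin 8 := ⟨2 * h.val, by omega⟩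
/-- Odd endpoint. -/
def odk (h : Fin 4) : Fin 8 := ⟨2 * h.val + 1, by omega⟩

theorem ev_or_od : ∀ k : Fin 8, ∃ h, k = evk h ∨ k = odk h := by decide
theorem tw_ev : ∀ h, twk (evk h) = odk h := by decide
theorem tw_od : ∀ h, twk (odk h) = evk h := by decide
theorem ev_ne_od : ∀ h j, evk h ≠ odk j := by decide

section main
variable {n : ℕ} (S : CompleteSelection n)

theorem sel_facts (hn : 8 ≤ n) : S.i 0 + 1 < S.i 1 ∧ S.i 1 + 1 < S.i 2 ∧ S.i 2 + 1 < S.i 3 ∧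
    S.i 3 < n ∧ (S.i 3 + 1 < n ∨ (S.i 3 + 1 = n ∧ 0 < S.i 0)) := by
  have h01 := S.mono (show (0 : Fin 4) < 1 by decide)
  have h12 := S.mono (show (1 : Fin 4) < 2 by decide)
  have h23 := S.mono (show (2 : Fin 4) < 3 by decide)
  have hl := S.le
  have c0 := S.complete 0 1
  have c1 := S.complete 1 2
  have c2 := S.complete 2 3
  have c3 := S.complete 3 0
  rw [Nat.mod_eq_of_lt (by omega)] at c0 c1 c2
  refine ⟨by omega, by omega, by omega, by omega, ?_⟩
  by_cases h : S.i 3 + 1 = n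
  · rw [h, Nat.mod_self] at c3; right; omega
  · left; omega

/-- Endpoint vertices. -/
def pk (k : Fin 8) : ZMod n := (S.i ⟨k.val / 2, by omega⟩ : ZMod n) + ((k.val % 2 : ℕ) : ZMod n)

theorem pk_ev (h : Fin 4) : pk S (evk h) = (S.i h : ZMod n) := by
  fin_cases h <;> simp [pk, evk]

theorem pk_od (h : Fin 4) : pk S (odk h) = (S.i h : ZMod n) + 1 := by
  fin_cases h <;> simp [pk, odk]

/-- Natural-number values of the endpoints. -/
def pv (k : Fin 8) : ℕ :=
  ![S.i 0, S.i 0 + 1, S.i 1, S.i 1 + 1, S.i 2, S.i 2 + 1, S.i 3,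
    if S.i 3 + 1 = n then 0 else S.i 3 + 1] k

theorem pk_val (hn : 8 ≤ n) (k : Fin 8) : (pk S k).val = pv S k := by
  obtain ⟨h0, h1, h2, h3, h4⟩ := sel_facts S hn
  have e : ∀ k : Fin 8, pk S k = ((S.i ⟨k.val / 2, by omega⟩ + k.val % 2 : ℕ) : ZMod n) := by
    intro k; simp [pk]
  rw [e, ZMod.val_natCast]
  have m0 : S.i 0 % n = S.i 0 := Nat.mod_eq_of_lt (by omega)
  have m1 : S.i 1 % n = S.i 1 := Nat.mod_eq_of_lt (by omega)
  have m2 : S.i 2 % n = S.i 2 := Nat.mod_eq_of_lt (by omega)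
  have m3 : S.i 3 % n = S.i 3 := Nat.mod_eq_of_lt (by omega)
  have k0 : (S.i 0 + 1) % n = S.i 0 + 1 := Nat.mod_eq_of_lt (by omega)
  have k1 : (S.i 1 + 1) % n = S.i 1 + 1 := Nat.mod_eq_of_lt (by omega)
  have k2 : (S.i 2 + 1) % n = S.i 2 + 1 := Nat.mod_eq_of_lt (by omega)
  have k3 : (S.i 3 + 1) % n = if S.i 3 + 1 = n then 0 else S.i 3 + 1 := by
    split_ifs with h
    · rw [h, Nat.mod_self]
    · exact Nat.mod_eq_of_lt (by omega)
  fin_cases k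
  · exact m0
  · exact k0
  · exact m1
  · exact k1
  · exact m2
  · exact k2
  · exact m3
  · exact k3

theorem pk_inj (hn : 8 ≤ n) : Function.Injective (pk S) := by
  obtain ⟨h0, h1, h2, h3, h4⟩ := sel_facts S hn
  intro j k h
  have h' : pv S j = pv S k := by rw [← pk_val S hn, ← pk_val S hn, h]
  by_contra hne
  fin_cases j <;> fin_cases k <;> first | exact hne rfl | (simp [pv] at h'; try (first | omega | (split_ifs at h' <;> omega)))

/-- Segment of a vertex. -/
def segv (v : ZMod n) : Fin 4 :=
  if v.val ≤ S.i 0 then 0 else if v.val ≤ S.i 1 then 1 else if v.val ≤ S.i 2 then 2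
  else if v.val ≤ S.i 3 then 3 else 0

theorem seg_pk (hn : 8 ≤ n) (k : Fin 8) : segv S (pk S k) = sgk k := by
  obtain ⟨h0, h1, h2, h3, h4⟩ := sel_facts S hn
  unfold segv
  rw [pk_val S hn]
  fin_cases k <;> simp only [pv] <;> (try simp) <;> (try split_ifs) <;> first | rfl | omega

theorem seg_succ (hn : 8 ≤ n) (v : ZMod n) (hv : ∀ h, v ≠ (S.i h : ZMod n)) :
    segv S (v + 1) = segv S v := by
  obtain ⟨h0, h1, h2, h3, h4⟩ := sel_facts S hn
  have : NeZero n := ⟨by omega⟩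
  have hv' : ∀ h, v.val ≠ S.i h := fun h e => hv h (by rw [← e]; simp)
  have a0 := hv' 0
  have a1 := hv' 1
  have a2 := hv' 2
  have a3 := hv' 3
  have hlt := ZMod.val_lt v
  have : Fact (1 < n) := ⟨by omega⟩
  have hs : (v + 1).val = if v.val + 1 = n then 0 else v.val + 1 := by
    rw [ZMod.val_add, ZMod.val_one]
    split_ifs with h
    · rw [h, Nat.mod_self]
    · exact Nat.mod_eq_of_lt (by omega)
  unfold segv
  rw [hs]
  split_ifs <;> first | rfl | omega

theorem factor (hn : 8 ≤ n) (f : ZMod n → Bool)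
    (hf : ∀ v, (∀ h, v ≠ (S.i h : ZMod n)) → f v = f (v + 1)) (v : ZMod n) :
    f v = f (S.i (segv S v) : ZMod n) := by
  have : NeZero n := ⟨by omega⟩
  have hA : ∀ h, f (S.i h : ZMod n) = f (S.i (segv S (S.i h : ZMod n)) : ZMod n) := by
    intro h
    have : segv S (S.i h : ZMod n) = h := by
      rw [← pk_ev, seg_pk S hn]; revert h; decide
    rw [this]
  have key : ∀ d : ℕ, ∀ v : ZMod n, v + (d : ZMod n) = (S.i 0 : ZMod n) →
      f v = f (S.i (segv S v) : ZMod n) := by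
    intro d
    induction d with
    | zero => intro v hv; simp at hv; rw [hv]; exact hA 0
    | succ d ih =>
      intro v hv
      by_cases h : ∃ h, v = (S.i h : ZMod n)
      · obtain ⟨h, rfl⟩ := h; exact hA h
      · push Not at h
        rw [hf v h, ih (v + 1) (by rw [← hv]; push_cast; ring), seg_succ S hn v h]
  exact key ((S.i 0 : ZMod n) - v).val v (by simp)

/-- The graph. -/
abbrev GI (I : Finset (Sym2 (ZMod n))) : SimpleGraph (ZMod n) :=
  SimpleGraph.fromEdgeSet ((tourEdges n \ ↑(removalSet S)) ∪ ↑I)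

theorem two_ne (hn : 8 ≤ n) : (1 : ZMod n) + 1 ≠ 0 := by
  intro h
  have h2 : ((2 : ℕ) : ZMod n) = 0 := by rw [← h]; norm_num
  rw [ZMod.natCast_eq_zero_iff] at h2
  have := Nat.le_of_dvd (by decide) h2
  omega

theorem mem_R (v w : ZMod n) : s(v, w) ∈ removalSet S ↔ ∃ h, (v = (S.i h : ZMod n) ∧ w = v + 1) ∨
    (w = (S.i h : ZMod n) ∧ v = w + 1) := by
  simp only [removalSet, Finset.mem_image, Finset.mem_univ, true_and, Sym2.eq_iff]
  refine exists_congr fun h => ?_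
  constructor
  · rintro (⟨rfl, rfl⟩ | ⟨rfl, rfl⟩) <;> simp
  · rintro (⟨rfl, rfl⟩ | ⟨rfl, rfl⟩) <;> simp

theorem adj_GI (hn : 8 ≤ n) (I : Finset (Sym2 (ZMod n))) (hI : ∀ e ∈ I, ¬ e.IsDiag)
    (v w : ZMod n) :
    (GI S I).Adj v w ↔ (w = v + 1 ∧ ∀ h, v ≠ (S.i h : ZMod n)) ∨
      (v = w + 1 ∧ ∀ h, w ≠ (S.i h : ZMod n)) ∨ s(v, w) ∈ I := by
  have h2 := two_ne hn
  have : Fact (1 < n) := ⟨by omega⟩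
  have h1 : (1 : ZMod n) ≠ 0 := one_ne_zero
  simp only [SimpleGraph.fromEdgeSet_adj, Set.mem_union, Set.mem_sdiff, tourEdges, Set.mem_ofPred_eq,
    Finset.mem_coe, mem_R, Sym2.eq_iff]
  constructor
  · rintro ⟨⟨⟨x, ⟨rfl, rfl⟩ | ⟨rfl, rfl⟩⟩, hR⟩ | h, hne⟩
    · left
      exact ⟨rfl, fun h e => hR ⟨h, Or.inl ⟨e, rfl⟩⟩⟩
    · right; left
      exact ⟨rfl, fun h e => hR ⟨h, Or.inr ⟨e, rfl⟩⟩⟩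
    · exact Or.inr (Or.inr h)
  · rintro (⟨rfl, h⟩ | ⟨rfl, h⟩ | h)
    · refine ⟨Or.inl ⟨⟨v, Or.inl ⟨rfl, rfl⟩⟩, ?_⟩, by simp⟩
      rintro ⟨k, ⟨e, -⟩ | ⟨-, e⟩⟩
      · exact h k e
      · exact h2 (by linear_combination -e)
    · refine ⟨Or.inl ⟨⟨w, Or.inr ⟨rfl, rfl⟩⟩, ?_⟩, by simp⟩
      rintro ⟨k, ⟨-, e⟩ | ⟨e, -⟩⟩
      · exact h2 (by linear_combination -e)
      · exact h k e
    · refine ⟨Or.inr h, fun e => hI _ h (by simpa using e)⟩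

/-- The set of inserted edges of a matching. -/
def FI (f : Fin 8 → Fin 8) : Finset (Sym2 (ZMod n)) :=
  Finset.univ.image (fun k => s(pk S k, pk S (f k)))

theorem FI_diag (hn : 8 ≤ n) (f : Fin 8 → Fin 8) (hf : ∀ k, f k ≠ k) :
    ∀ e ∈ FI S f, ¬ e.IsDiag := by
  intro e he
  simp only [FI, Finset.mem_image, Finset.mem_univ, true_and] at he
  obtain ⟨k, rfl⟩ := he
  simp only [Sym2.mk_isDiag_iff]
  exact fun h => hf k (pk_inj S hn h).symm

theorem mem_FI (f : Fin 8 → Fin 8) (hf : ∀ k, f (f k) = k) (v w : ZMod n) :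
    s(v, w) ∈ FI S f ↔ ∃ k, v = pk S k ∧ w = pk S (f k) := by
  simp only [FI, Finset.mem_image, Finset.mem_univ, true_and, Sym2.eq_iff]
  constructor
  · rintro ⟨k, ⟨rfl, rfl⟩ | ⟨rfl, rfl⟩⟩
    · exact ⟨k, rfl, rfl⟩
    · exact ⟨f k, rfl, by rw [hf]⟩
  · rintro ⟨k, rfl, rfl⟩
    exact ⟨k, Or.inl ⟨rfl, rfl⟩⟩

theorem conn_GI (hn : 8 ≤ n) (f : Fin 8 → Fin 8) (hf : ∀ k, f (f k) = k) (hne : ∀ k, f k ≠ k) :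
    (GI S (FI S f)).Connected ↔ connB f := by
  have hsA : ∀ h, segv S (S.i h : ZMod n) = h := by
    intro h
    rw [← pk_ev, seg_pk S hn]; revert h; decide
  rw [conn_iff]
  simp only [adj_GI S hn _ (FI_diag S hn f hne), mem_FI S f hf]
  constructor
  · intro H a b c d hk
    have := H (fun v => (![a,b,c,d] : Fin 4 → Bool) (segv S v)) (by
      rintro x y (⟨rfl, h⟩ | ⟨rfl, h⟩ | ⟨k, rfl, rfl⟩)
      · simp only [seg_succ S hn _ h]
      · simp only [seg_succ S hn _ h]
      · simp only [seg_pk S hn, hk k])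
    have q := fun h => this (S.i 0 : ZMod n) (S.i h : ZMod n)
    simp only [hsA] at q
    exact ⟨q 1, q 2, q 3⟩
  · intro H g hg
    have hfac := factor S hn g (fun v hv => hg _ _ (Or.inl ⟨rfl, hv⟩))
    have hG : ∀ h, (![g (S.i 0 : ZMod n), g (S.i 1 : ZMod n), g (S.i 2 : ZMod n),
        g (S.i 3 : ZMod n)] : Fin 4 → Bool) h = g (S.i h : ZMod n) := by
      intro h; fin_cases h <;> rfl
    obtain ⟨e1, e2, e3⟩ := H (g (S.i 0 : ZMod n)) (g (S.i 1 : ZMod n)) (g (S.i 2 : ZMod n))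
      (g (S.i 3 : ZMod n)) (by
        intro k
        rw [hG, hG, ← seg_pk S hn, ← seg_pk S hn, ← hfac, ← hfac]
        exact hg _ _ (Or.inr (Or.inr ⟨k, rfl, rfl⟩)))
    have hc : ∀ h, g (S.i h : ZMod n) = g (S.i 0 : ZMod n) := by
      intro h; fin_cases h
      · rfl
      · exact e1.symm
      · exact e2.symm
      · exact e3.symm
    intro x y
    rw [hfac x, hfac y]
    exact (hc _).trans (hc _).symm
end main

section main2
variable {n : ℕ} (S : CompleteSelection n)

theorem deg_GI (hn : 8 ≤ n) (f : Fin 8 → Fin 8) (hf : ∀ k, f (f k) = k) (hne : ∀ k, f k ≠ k)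
    (hsg : ∀ k, sgk (f k) ≠ sgk k) (v : ZMod n) : ((GI S (FI S f)).neighborSet v).ncard = 2 := by
  have h2 := two_ne hn
  have hinj := pk_inj S hn
  have hadj := adj_GI S hn _ (FI_diag S hn f hne)
  have hoe : ∀ h j, (S.i h : ZMod n) + 1 ≠ S.i j := fun h j e => by
    rw [← pk_od, ← pk_ev] at e
    exact ev_ne_od _ _ (hinj e).symm
  by_cases hv : ∃ k, v = pk S k
  · obtain ⟨k, rfl⟩ := hv
    obtain ⟨h, rfl | rfl⟩ := ev_or_od k
    · have hA : ∀ j, pk S (evk h) - 1 ≠ (S.i j : ZMod n) := fun j e => by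
        apply hoe j h
        rw [← e, pk_ev]; ring
      have : (GI S (FI S f)).neighborSet (pk S (evk h)) = {pk S (evk h) - 1, pk S (f (evk h))} := by
        ext w
        rw [SimpleGraph.mem_neighborSet, hadj, mem_FI S f hf]
        simp only [Set.mem_insert_iff, Set.mem_singleton_iff]
        constructor
        · rintro (⟨rfl, q⟩ | ⟨q, q'⟩ | ⟨k, q, rfl⟩)
          · exact absurd (pk_ev S h) (q h)
          · left; rw [q]; ring
          · right; rw [hinj q]
        · rintro (rfl | rfl)
          · right; left; exact ⟨by ring, hA⟩
          · right; right; exact ⟨_, rfl, rfl⟩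
      rw [this]
      apply Set.ncard_pair
      intro e
      have q := seg_succ S hn _ hA
      rw [e, seg_pk S hn] at q
      rw [← e, sub_add_cancel, seg_pk S hn] at q
      exact hsg _ q.symm
    · have hA : ∀ j, pk S (odk h) ≠ (S.i j : ZMod n) := fun j e => by
        apply hoe h j
        rw [← e, pk_od]
      have : (GI S (FI S f)).neighborSet (pk S (odk h)) = {pk S (odk h) + 1, pk S (f (odk h))} := by
        ext w
        rw [SimpleGraph.mem_neighborSet, hadj, mem_FI S f hf]
        simp only [Set.mem_insert_iff, Set.mem_singleton_iff]
        constructor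
        · rintro (⟨rfl, q⟩ | ⟨q, q'⟩ | ⟨k, q, rfl⟩)
          · left; rfl
          · rw [pk_od] at q
            exact absurd (add_right_cancel q).symm (q' h)
          · right; rw [hinj q]
        · rintro (rfl | rfl)
          · left; exact ⟨rfl, hA⟩
          · right; right; exact ⟨_, rfl, rfl⟩
      rw [this]
      apply Set.ncard_pair
      intro e
      have q := seg_succ S hn _ hA
      rw [e, seg_pk S hn, seg_pk S hn] at q
      exact hsg _ q
  · push Not at hv
    have hA : ∀ j, v ≠ (S.i j : ZMod n) := fun j e => hv (evk j) (by rw [e, pk_ev])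
    have hB : ∀ j, v - 1 ≠ (S.i j : ZMod n) := fun j e => hv (odk j) (by rw [pk_od, ← e]; ring)
    have : (GI S (FI S f)).neighborSet v = {v + 1, v - 1} := by
      ext w
      rw [SimpleGraph.mem_neighborSet, hadj, mem_FI S f hf]
      simp only [Set.mem_insert_iff, Set.mem_singleton_iff]
      constructor
      · rintro (⟨rfl, q⟩ | ⟨q, q'⟩ | ⟨k, q, rfl⟩)
        · left; rfl
        · right; rw [q]; ring
        · exact absurd q (hv k)
      · rintro (rfl | rfl)
        · left; exact ⟨rfl, hA⟩
        · right; left; exact ⟨by ring, hB⟩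
    rw [this]
    apply Set.ncard_pair
    intro e
    exact h2 (by linear_combination e)

theorem tw_mem_R (k : Fin 8) : s(pk S k, pk S (twk k)) ∈ removalSet S := by
  rw [mem_R]
  obtain ⟨h, rfl | rfl⟩ := ev_or_od k
  · rw [tw_ev, pk_ev, pk_od]; exact ⟨h, Or.inl ⟨rfl, rfl⟩⟩
  · rw [tw_od, pk_ev, pk_od]; exact ⟨h, Or.inr ⟨rfl, rfl⟩⟩

theorem R_tw (hn : 8 ≤ n) (j k : Fin 8) (h : s(pk S j, pk S k) ∈ removalSet S) : k = twk j := by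
  rw [mem_R] at h
  obtain ⟨h, ⟨e1, e2⟩ | ⟨e1, e2⟩⟩ := h
  · rw [e1, ← pk_od] at e2
    rw [← pk_ev] at e1
    rw [pk_inj S hn e1, pk_inj S hn e2, tw_ev]
  · rw [e1, ← pk_od] at e2
    rw [← pk_ev] at e1
    rw [pk_inj S hn e1, pk_inj S hn e2, tw_od]

theorem cover_s16 (hn : 8 ≤ n) (I : Finset (Sym2 (ZMod n))) (hI : ∀ e ∈ I, ¬ e.IsDiag)
    (hd : ∀ v, ((GI S I).neighborSet v).ncard = 2) (k : Fin 8) : ∃ e ∈ I, pk S k ∈ e := by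
  by_contra hcon
  push Not at hcon
  have hadj := adj_GI S hn _ hI
  have : ∃ x, (GI S I).neighborSet (pk S k) ⊆ {x} := by
    obtain ⟨h, rfl | rfl⟩ := ev_or_od k
    · refine ⟨pk S (evk h) - 1, fun w hw => ?_⟩
      rw [SimpleGraph.mem_neighborSet, hadj] at hw
      obtain ⟨rfl, q⟩ | ⟨q, q'⟩ | q := hw
      · exact absurd (pk_ev S h) (q h)
      · rw [q]; simp
      · exact absurd (Sym2.mem_mk_left _ _) (hcon _ q)
    · refine ⟨pk S (odk h) + 1, fun w hw => ?_⟩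
      rw [SimpleGraph.mem_neighborSet, hadj] at hw
      obtain ⟨rfl, q⟩ | ⟨q, q'⟩ | q := hw
      · rfl
      · rw [pk_od] at q
        exact absurd (add_right_cancel q).symm (q' h)
      · exact absurd (Sym2.mem_mk_left _ _) (hcon _ q)
  obtain ⟨x, hx⟩ := this
  have := Set.ncard_le_ncard hx (Set.finite_singleton x)
  rw [hd, Set.ncard_singleton] at this
  omega

theorem deg_eq (hn : 8 ≤ n) (I : Finset (Sym2 (ZMod n))) (hc : I.card = 4)
    (hI : ∀ e ∈ I, ¬ e.IsDiag) (hcov : ∀ k, ∃ e ∈ I, pk S k ∈ e) (v : ZMod n) :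
    (I.filter (fun e => v ∈ e)).card = if v ∈ Finset.univ.image (pk S) then 1 else 0 := by
  have : NeZero n := ⟨by omega⟩
  have hle : ∀ v ∈ (Finset.univ : Finset (ZMod n)),
      (if v ∈ Finset.univ.image (pk S) then 1 else 0) ≤ (I.filter (fun e => v ∈ e)).card := by
    intro v _
    split_ifs with h
    · rw [Finset.mem_image] at h
      obtain ⟨k, -, rfl⟩ := h
      obtain ⟨e, he, hk⟩ := hcov k
      exact Finset.card_pos.2 ⟨e, Finset.mem_filter.2 ⟨he, hk⟩⟩
    · exact Nat.zero_le _
  have h1 : ∑ v : ZMod n, (if v ∈ Finset.univ.image (pk S) then 1 else 0) = 8 := by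
    rw [Finset.sum_ite_mem, Finset.univ_inter, Finset.sum_const,
      Finset.card_image_of_injective _ (pk_inj S hn)]
    simp
  have h2 : ∑ v : ZMod n, (I.filter (fun e => v ∈ e)).card = 8 := by
    have := Finset.sum_card_bipartiteAbove_eq_sum_card_bipartiteBelow
      (s := (Finset.univ : Finset (ZMod n))) (t := I) (fun v e => v ∈ e)
    simp only [Finset.bipartiteAbove, Finset.bipartiteBelow] at this
    rw [this, Finset.sum_congr rfl (g := fun _ => 2), Finset.sum_const, hc]
    · rfl
    · intro e he
      have hne := hI e he
      induction e with
      | _ x y =>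
        rw [Sym2.mk_isDiag_iff] at hne
        rw [← Finset.card_pair hne]
        congr 1
        ext z; simp
  have := (Finset.sum_eq_sum_iff_of_le hle).1 (h1.trans h2.symm) v (Finset.mem_univ v)
  exact this.symm

theorem exists_matching (hn : 8 ≤ n) (I : Finset (Sym2 (ZMod n))) (hc : I.card = 4)
    (hI : ∀ e ∈ I, ¬ e.IsDiag) (hcov : ∀ k, ∃ e ∈ I, pk S k ∈ e) :
    ∃ f : Fin 8 → Fin 8, (∀ k, f (f k) = k) ∧ (∀ k, f k ≠ k) ∧ I = FI S f := by
  have hdeg := deg_eq S hn I hc hI hcov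
  have hinj := pk_inj S hn
  have hran : ∀ e ∈ I, ∀ v ∈ e, ∃ k, v = pk S k := by
    intro e he v hv
    by_contra hcon
    have := hdeg v
    rw [if_neg (by simpa [eq_comm] using hcon), Finset.card_eq_zero] at this
    have h : e ∈ I.filter (fun e => v ∈ e) := Finset.mem_filter.2 ⟨he, hv⟩
    rw [this] at h
    simp at h
  have huniq : ∀ e ∈ I, ∀ e' ∈ I, ∀ k, pk S k ∈ e → pk S k ∈ e' → e = e' := by
    intro e he e' he' k hk hk'
    have := hdeg (pk S k)
    rw [if_pos (by simp)] at this
    exact Finset.card_le_one.1 this.le e (Finset.mem_filter.2 ⟨he, hk⟩) e'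
      (Finset.mem_filter.2 ⟨he', hk'⟩)
  have hex : ∀ k, ∃ j, s(pk S k, pk S j) ∈ I := by
    intro k
    obtain ⟨e, he, hk⟩ := hcov k
    obtain ⟨w, rfl⟩ := hk
    obtain ⟨j, rfl⟩ := hran _ he w (Sym2.mem_mk_right _ _)
    exact ⟨j, he⟩
  choose f hf using hex
  have hne : ∀ k, f k ≠ k := fun k e => hI _ (hf k) (by rw [e]; simp)
  refine ⟨f, fun k => ?_, hne, ?_⟩
  · have := huniq _ (hf k) _ (hf (f k)) (f k) (Sym2.mem_mk_right _ _) (Sym2.mem_mk_left _ _)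
    rw [Sym2.eq_iff] at this
    obtain ⟨e, -⟩ | ⟨e, -⟩ := this
    · exact absurd (hinj e).symm (hne k)
    · exact (hinj e).symm
  · ext e
    simp only [FI, Finset.mem_image, Finset.mem_univ, true_and]
    constructor
    · intro he
      induction e with
      | _ x y =>
        obtain ⟨k, rfl⟩ := hran _ he x (Sym2.mem_mk_left _ _)
        exact ⟨k, huniq _ (hf k) _ he k (Sym2.mem_mk_left _ _) (Sym2.mem_mk_left _ _)⟩
    · rintro ⟨k, rfl⟩
      exact hf k

theorem FI_card (hn : 8 ≤ n) (f : Fin 8 → Fin 8) (hf : f ∈ listM) : (FI S f).card = 4 := by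
  have : FI S f = (Finset.univ.image (fun k : Fin 8 => s(k, f k))).image (Sym2.map (pk S)) := by
    rw [Finset.image_image]; rfl
  rw [this, Finset.card_image_of_injective _ (Sym2.map.injective (pk_inj S hn)), listM_card f hf]

end main2

/-- For every `n ≥ 8` and every complete selection `S`, there are exactly 25 sets
`I` of 4 unordered pairs of distinct vertices, disjoint from `R(S)`, such that the
graph with edge set `(E(T) \ R(S)) ∪ I` is a Hamiltonian cycle. -/
theorem twentyfive_reinsertion_sets (n : ℕ) (hn : 8 ≤ n) (S : CompleteSelection n) :
    {I : Finset (Sym2 (ZMod n)) |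
        I.card = 4 ∧ (∀ e ∈ I, ¬ e.IsDiag) ∧ Disjoint I (removalSet S) ∧
        IsHamCycleGraph (SimpleGraph.fromEdgeSet
          ((tourEdges n \ ↑(removalSet S)) ∪ ↑I))}.ncard = 25 := by
  have : NeZero n := ⟨by omega⟩
  have : Fact (1 < n) := ⟨by omega⟩
  have hset : {I : Finset (Sym2 (ZMod n)) |
        I.card = 4 ∧ (∀ e ∈ I, ¬ e.IsDiag) ∧ Disjoint I (removalSet S) ∧
        IsHamCycleGraph (SimpleGraph.fromEdgeSet
          ((tourEdges n \ ↑(removalSet S)) ∪ ↑I))} =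
      FI S '' (listM.toFinset : Set (Fin 8 → Fin 8)) := by
    ext I
    simp only [Set.mem_ofPred_eq, Set.mem_image, Finset.mem_coe, List.mem_toFinset]
    constructor
    · rintro ⟨hc, hI, hR, hH⟩
      rw [ham_iff] at hH
      obtain ⟨hco, hd⟩ := hH
      obtain ⟨f, hf, hne, rfl⟩ := exists_matching S hn I hc hI (cover_s16 S hn I hI hd)
      refine ⟨f, (mem_listM_iff f).2 ⟨hf, hne, fun k e => ?_, (conn_GI S hn f hf hne).1 hco⟩, rfl⟩
      have h1 : s(pk S k, pk S (f k)) ∈ FI S f := (mem_FI S f hf _ _).2 ⟨k, rfl, rfl⟩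
      refine Finset.disjoint_left.1 hR h1 ?_
      rw [e]; exact tw_mem_R S k
    · rintro ⟨f, hfl, rfl⟩
      obtain ⟨hf, hne, ht, hco⟩ := (mem_listM_iff f).1 hfl
      refine ⟨FI_card S hn f hfl, FI_diag S hn f hne, ?_, ?_⟩
      · rw [Finset.disjoint_left]
        intro e he heR
        simp only [FI, Finset.mem_image, Finset.mem_univ, true_and] at he
        obtain ⟨k, rfl⟩ := he
        exact ht k (R_tw S hn _ _ heR)
      · rw [ham_iff]
        exact ⟨(conn_GI S hn f hf hne).2 hco, deg_GI S hn f hf hne (listM_sg f hfl)⟩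
  rw [hset, Set.InjOn.ncard_image, Set.ncard_coe_finset,
    List.toFinset_card_of_nodup listM_nodup]
  · rfl
  · intro f hf g hg hfg
    simp only [Finset.mem_coe, List.mem_toFinset] at hf hg
    obtain ⟨hf1, -⟩ := (mem_listM_iff f).1 hf
    obtain ⟨hg1, -⟩ := (mem_listM_iff g).1 hg
    funext k
    have h1 : s(pk S k, pk S (f k)) ∈ FI S f := (mem_FI S f hf1 _ _).2 ⟨k, rfl, rfl⟩
    rw [hfg, mem_FI S g hg1] at h1
    obtain ⟨j, e1, e2⟩ := h1
    rw [pk_inj S hn e2, pk_inj S hn e1]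
end

section
/- For every n ≥ 8, every symmetric cost function c on ℤ/nℤ, and every complete selection S = (i₁,i₂,i₃,i₄), the gain of the two-bridges move r₂₅ = (+4,+3,+2) decomposes as the sum of two parallel-bridge costs: Δ_{r₂₅}(i₁,i₂,i₃,i₄) = cost_d(i₁,i₃) + cost_d(i₂,i₄). -/
/-- Cost of an unordered pair under a symmetric cost function. -/
def pairCost {n : ℕ} (c : ZMod n → ZMod n → ℝ) (hc : ∀ x y, c x y = c y x) :
    Sym2 (ZMod n) → ℝ := Sym2.lift ⟨c, hc⟩

/-- The gain `Δ_r(S) = c(R(S)) − c(I_S(r))` of the 4-OPT move given by scheme `r`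
on selection `S`. -/
def gain {n : ℕ} (c : ZMod n → ZMod n → ℝ) (hc : ∀ x y, c x y = c y x)
    (S : CompleteSelection n) (r : Scheme) : ℝ :=
  ∑ e ∈ removalSet S, pairCost c hc e - ∑ e ∈ instReins S r, pairCost c hc e

/-- The parallel-bridge cost `cost_d`. -/
def costD {n : ℕ} (c : ZMod n → ZMod n → ℝ) (a b : ZMod n) : ℝ :=
  c a (a + 1) + c b (b + 1) - c a (b + 1) - c (a + 1) b

/-- The crossed-bridge cost `cost_c`. -/
def costC {n : ℕ} (c : ZMod n → ZMod n → ℝ) (a b : ZMod n) : ℝ :=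
  c a (a + 1) + c b (b + 1) - c a b - c (a + 1) (b + 1)

/-- The gain of the two-bridges move `r₂₅ = (+4,+3,+2)` decomposes as the sum of
two parallel-bridge costs: `Δ_{r₂₅}(i₁,i₂,i₃,i₄) = cost_d(i₁,i₃) + cost_d(i₂,i₄)`. -/
theorem gain_two_bridges (n : ℕ) (hn : 8 ≤ n) (c : ZMod n → ZMod n → ℝ)
    (hc : ∀ x y, c x y = c y x) (S : CompleteSelection n) :
    gain c hc S (4, 3, 2) =
      costD c (S.i 0 : ZMod n) (S.i 2 : ZMod n) +
      costD c (S.i 1 : ZMod n) (S.i 3 : ZMod n) := by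
  have hlt : ∀ k, S.i k < n := fun k => by
    have h1 : S.i k ≤ S.i 3 := S.mono.monotone (by fin_cases k <;> decide)
    have := S.le
    omega
  have inj : ∀ h k : Fin 4, h ≠ k → (S.i h : ZMod n) ≠ (S.i k : ZMod n) := by
    intro h k hk e
    rw [ZMod.natCast_eq_natCast_iff', Nat.mod_eq_of_lt (hlt h), Nat.mod_eq_of_lt (hlt k)] at e
    exact hk (S.mono.injective e)
  have adj : ∀ h k : Fin 4, (S.i h : ZMod n) + 1 ≠ (S.i k : ZMod n) := by
    intro h k e
    have e' : ((S.i h + 1 : ℕ) : ZMod n) = (S.i k : ZMod n) := by push_cast; exact e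
    rw [ZMod.natCast_eq_natCast_iff', Nat.mod_eq_of_lt (hlt k)] at e'
    exact S.complete h k e'
  have hR : removalSet S = {s((S.i 0 : ZMod n), (S.i 0 : ZMod n) + 1),
      s((S.i 1 : ZMod n), (S.i 1 : ZMod n) + 1), s((S.i 2 : ZMod n), (S.i 2 : ZMod n) + 1),
      s((S.i 3 : ZMod n), (S.i 3 : ZMod n) + 1)} := by
    have hu : (Finset.univ : Finset (Fin 4)) = {0, 1, 2, 3} := by decide
    simp only [removalSet, hu, Finset.image_insert, Finset.image_singleton]
  have hr : reins (4, 3, 2) = {s(((1 : ZMod 4), false), ((3 : ZMod 4), true)),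
      s(((0 : ZMod 4), false), ((2 : ZMod 4), true)),
      s(((3 : ZMod 4), false), ((1 : ZMod 4), true)),
      s(((2 : ZMod 4), false), ((0 : ZMod 4), true))} := by
    decide
  have l1 : ∀ b, instLabel S (1, b) = (S.i 0 : ZMod n) + (if b then 1 else 0) := fun _ => rfl
  have l2 : ∀ b, instLabel S (2, b) = (S.i 1 : ZMod n) + (if b then 1 else 0) := fun _ => rfl
  have l3 : ∀ b, instLabel S (3, b) = (S.i 2 : ZMod n) + (if b then 1 else 0) := fun _ => rfl
  have l4 : ∀ b, instLabel S (0, b) = (S.i 3 : ZMod n) + (if b then 1 else 0) := fun _ => rfl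
  have hI : instReins S (4, 3, 2) = {s((S.i 0 : ZMod n), (S.i 2 : ZMod n) + 1),
      s((S.i 3 : ZMod n), (S.i 1 : ZMod n) + 1), s((S.i 2 : ZMod n), (S.i 0 : ZMod n) + 1),
      s((S.i 1 : ZMod n), (S.i 3 : ZMod n) + 1)} := by
    simp [instReins, hr, Finset.image_insert, Finset.image_singleton, l1, l2, l3, l4]
  have h01 := inj 0 1 (by decide)
  have h02 := inj 0 2 (by decide)
  have h03 := inj 0 3 (by decide)
  have h12 := inj 1 2 (by decide)
  have h13 := inj 1 3 (by decide)
  have h23 := inj 2 3 (by decide)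
  have adj' : ∀ h k : Fin 4, (S.i k : ZMod n) ≠ (S.i h : ZMod n) + 1 := fun h k => (adj h k).symm
  have key : ∀ f : Sym2 (ZMod n) → ℝ, ∀ p q r t : Sym2 (ZMod n), p ≠ q → p ≠ r → p ≠ t →
      q ≠ r → q ≠ t → r ≠ t →
      ∑ e ∈ ({p, q, r, t} : Finset (Sym2 (ZMod n))), f e = f p + f q + f r + f t := by
    intro f p q r t h1 h2 h3 h4 h5 h6
    rw [Finset.sum_insert (by simp [*]), Finset.sum_insert (by simp [*]),
      Finset.sum_insert (by simp [*]), Finset.sum_singleton]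
    ring
  unfold gain
  rw [hR, hI, key, key]
  · simp only [pairCost, Sym2.lift_mk, costD]
    rw [hc (S.i 3 : ZMod n) ((S.i 1 : ZMod n) + 1), hc (S.i 2 : ZMod n) ((S.i 0 : ZMod n) + 1)]
    ring
  all_goals
    simp [Sym2.eq_iff, adj, adj', h01, h02, h03, h12, h13, h23, h01.symm, h02.symm, h03.symm,
      h12.symm, h13.symm, h23.symm]
end

section
/- For every n ≥ 8, every symmetric cost function c on ℤ/nℤ, and every complete selection S = (i₁,i₂,i₃,i₄), the gains of the two moves in orbit O₆ decompose as one crossed bridge plus one parallel bridge: Δ_{r₁₀}(i₁,i₂,i₃,i₄) = cost_c(i₁,i₃) + cost_d(i₂,i₄) and Δ_{r₁₆}(i₁,i₂,i₃,i₄) = cost_d(i₁,i₃) + cost_c(i₂,i₄), where r₁₀ = (−3,−4,+2) and r₁₆ = (+4,−2,−3). -/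
lemma sel_inj {n : ℕ} (hn : 8 ≤ n) (S : CompleteSelection n) (h k : Fin 4) :
    (S.i h : ZMod n) = (S.i k : ZMod n) ↔ h = k := by
  have hb : ∀ j, S.i j < n := fun j => by
    have h1 : S.i j ≤ S.i 3 := S.mono.monotone (Fin.le_last j)
    have := S.le
    omega
  constructor
  · intro e
    rw [ZMod.natCast_eq_natCast_iff'] at e
    rw [Nat.mod_eq_of_lt (hb h), Nat.mod_eq_of_lt (hb k)] at e
    exact S.mono.injective e
  · rintro rfl
    rfl

lemma sel_succ {n : ℕ} (hn : 8 ≤ n) (S : CompleteSelection n) (h k : Fin 4) :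
    (S.i h : ZMod n) + 1 ≠ (S.i k : ZMod n) := by
  have hb : S.i k < n := by
    have h1 : S.i k ≤ S.i 3 := S.mono.monotone (Fin.le_last k)
    have := S.le
    omega
  intro e
  have e' : ((S.i h + 1 : ℕ) : ZMod n) = (S.i k : ZMod n) := by
    push_cast
    exact e
  rw [ZMod.natCast_eq_natCast_iff', Nat.mod_eq_of_lt hb] at e'
  exact S.complete h k e'

lemma inst_r10 {n : ℕ} (S : CompleteSelection n) : instReins S (-3, -4, 2) =
    {s((S.i 0 : ZMod n), (S.i 2 : ZMod n)), s((S.i 1 : ZMod n) + 1, (S.i 3 : ZMod n)),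
     s((S.i 2 : ZMod n) + 1, (S.i 0 : ZMod n) + 1),
     s((S.i 1 : ZMod n), (S.i 3 : ZMod n) + 1)} := by
  have hr : reins (-3, -4, 2) = {s((1, false), (3, false)), s((2, true), (0, false)),
      s((3, true), (1, true)), s((2, false), (0, true))} := by decide
  have h0 : (⟨((1 : ZMod 4) - 1).val, ZMod.val_lt _⟩ : Fin 4) = 0 := by decide
  have h1 : (⟨((2 : ZMod 4) - 1).val, ZMod.val_lt _⟩ : Fin 4) = 1 := by decide
  have h2 : (⟨((3 : ZMod 4) - 1).val, ZMod.val_lt _⟩ : Fin 4) = 2 := by decide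
  have h3 : (⟨((0 : ZMod 4) - 1).val, ZMod.val_lt _⟩ : Fin 4) = 3 := by decide
  simp only [instReins, hr, Finset.image_insert, Finset.image_singleton, Sym2.map_mk,
    instLabel, h0, h1, h2, h3, Bool.false_eq_true, if_true, if_false, add_zero]

lemma inst_r16 {n : ℕ} (S : CompleteSelection n) : instReins S (4, -2, -3) =
    {s((S.i 0 : ZMod n), (S.i 2 : ZMod n) + 1), s((S.i 3 : ZMod n), (S.i 1 : ZMod n)),
     s((S.i 0 : ZMod n) + 1, (S.i 2 : ZMod n)),
     s((S.i 1 : ZMod n) + 1, (S.i 3 : ZMod n) + 1)} := by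
  have hr : reins (4, -2, -3) = {s((1, false), (3, true)), s((0, false), (2, false)),
      s((1, true), (3, false)), s((2, true), (0, true))} := by decide
  have h0 : (⟨((1 : ZMod 4) - 1).val, ZMod.val_lt _⟩ : Fin 4) = 0 := by decide
  have h1 : (⟨((2 : ZMod 4) - 1).val, ZMod.val_lt _⟩ : Fin 4) = 1 := by decide
  have h2 : (⟨((3 : ZMod 4) - 1).val, ZMod.val_lt _⟩ : Fin 4) = 2 := by decide
  have h3 : (⟨((0 : ZMod 4) - 1).val, ZMod.val_lt _⟩ : Fin 4) = 3 := by decide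
  simp only [instReins, hr, Finset.image_insert, Finset.image_singleton, Sym2.map_mk,
    instLabel, h0, h1, h2, h3, Bool.false_eq_true, if_true, if_false, add_zero]

lemma rem_sum {n : ℕ} (hn : 8 ≤ n) (c : ZMod n → ZMod n → ℝ)
    (hc : ∀ x y, c x y = c y x) (S : CompleteSelection n) :
    ∑ e ∈ removalSet S, pairCost c hc e =
      ∑ k : Fin 4, c (S.i k : ZMod n) ((S.i k : ZMod n) + 1) := by
  unfold removalSet
  rw [Finset.sum_image]
  · rfl
  · intro h _ k _ e
    simp only [Sym2.eq_iff] at e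
    rcases e with e | e
    · exact (sel_inj hn S h k).1 e.1
    · exact absurd e.1.symm (sel_succ hn S k h)

/-- The gains of the two moves of orbit `O₆`, `r₁₀ = (−3,−4,+2)` and
`r₁₆ = (+4,−2,−3)`, decompose as one crossed bridge plus one parallel bridge. -/
theorem gain_orbit_six (n : ℕ) (hn : 8 ≤ n) (c : ZMod n → ZMod n → ℝ)
    (hc : ∀ x y, c x y = c y x) (S : CompleteSelection n) :
    gain c hc S (-3, -4, 2) =
      costC c (S.i 0 : ZMod n) (S.i 2 : ZMod n) +
      costD c (S.i 1 : ZMod n) (S.i 3 : ZMod n) ∧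
    gain c hc S (4, -2, -3) =
      costD c (S.i 0 : ZMod n) (S.i 2 : ZMod n) +
      costC c (S.i 1 : ZMod n) (S.i 3 : ZMod n) := by
  have H := sel_inj hn S
  have H1 := sel_succ hn S
  have H2 := fun h k => (H1 h k).symm
  constructor
  · rw [gain, rem_sum hn, inst_r10, Finset.sum_insert, Finset.sum_insert, Finset.sum_insert,
      Finset.sum_singleton]
    · simp only [pairCost, Sym2.lift_mk, Fin.sum_univ_four, costC, costD]
      rw [hc ((S.i 2 : ZMod n) + 1)]
      ring
    all_goals simp [H, H1, H2]
  · rw [gain, rem_sum hn, inst_r16, Finset.sum_insert, Finset.sum_insert, Finset.sum_insert,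
      Finset.sum_singleton]
    · simp only [pairCost, Sym2.lift_mk, Fin.sum_univ_four, costC, costD]
      rw [hc (S.i 3 : ZMod n) (S.i 1 : ZMod n)]
      ring
    all_goals simp [H, H1, H2]
end
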